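/- Let m ≥ 1 and let A : {0,1}^m → ℝ satisfy E_A[x_S] = 2^{−|S|} for every S ⊆ [m] with |S| < m (in particular Σ_x A(x) = 1). Then for every x ∈ {0,1}^m, A(x) = 2^{−m} + (−1)^{z(x)} · δ(A), where z(x) denotes the number of coordinates of x equal to 0 and δ(A) := A(1,…,1) − 2^{−m}. -/

import Mathlib

/-- The `S`-moment `E_A[x_S]` of a function `A` on `{0,1}^m`. -/
noncomputable def momentOf {m : ℕ} (A : (Fin m → Bool) → ℝ) (S : Finset (Fin m)) : ℝ :=
  ∑ x ∈ Finset.univ.filter (fun x : Fin m → Bool => ∀ i ∈ S, x i = true), A x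

theorem moment_powerset {m : ℕ} (A : (Fin m → Bool) → ℝ) (U : Finset (Fin m)) :
    momentOf A Uᶜ = ∑ T ∈ U.powerset, A (fun i => decide (i ∉ T)) := by
  unfold momentOf
  symm
  refine Finset.sum_bij' (fun T _ => fun i => decide (i ∉ T))
    (fun x _ => Finset.univ.filter (fun i => x i = false)) ?_ ?_ ?_ ?_ ?_
  · intro T hT
    simp only [Finset.mem_powerset] at hT
    simp only [Finset.mem_filter, Finset.mem_univ, true_and, Finset.mem_compl, decide_eq_true_eq]
    exact fun i hi h => hi (hT h)
  · intro x hx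
    simp only [Finset.mem_filter, Finset.mem_univ, true_and, Finset.mem_compl] at hx
    rw [Finset.mem_powerset]
    intro i hi
    simp only [Finset.mem_filter, Finset.mem_univ, true_and] at hi
    by_contra h
    simp [hx i h] at hi
  · intro T _
    ext i
    simp
  · intro x _
    ext i
    simp
  · intro T _
    rfl

/-- if `A : {0,1}^m → ℝ` agrees with the uniform distribution on all moments
of degree less than `m`, then `A(x) = 2^{-m} + (-1)^{z(x)}·δ(A)` where `z(x)` is the number
of zero bits of `x` and `δ(A) = A(1,…,1) − 2^{-m}`. -/
theorem stmt_11 (m : ℕ) (hm : 1 ≤ m) (A : (Fin m → Bool) → ℝ)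
    (hA : ∀ S : Finset (Fin m), S.card < m → momentOf A S = (1/2 : ℝ) ^ S.card) :
    ∀ x : Fin m → Bool,
      A x = (1/2 : ℝ) ^ m
        + (-1 : ℝ) ^ ((Finset.univ.filter (fun i => x i = false)).card)
          * (A (fun _ => true) - (1/2 : ℝ) ^ m) := by
  have key : ∀ U : Finset (Fin m), A (fun i => decide (i ∉ U)) = (1/2 : ℝ) ^ m
      + (-1 : ℝ) ^ U.card * (A (fun _ => true) - (1/2 : ℝ) ^ m) := by
    intro U
    induction U using Finset.strongInduction with
    | H U ih =>
      rcases U.eq_empty_or_nonempty with rfl | hU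
      · simp
      · have hc : U.card + Uᶜ.card = m := by
          simpa using Finset.card_add_card_compl U
        have hpos := hU.card_pos
        have h1 := hA Uᶜ (by omega)
        rw [moment_powerset, ← Finset.insert_erase (Finset.mem_powerset_self U),
          Finset.sum_insert (Finset.notMem_erase _ _)] at h1
        rw [Finset.sum_congr rfl (fun T hT => ih T (by
          rw [Finset.mem_erase, Finset.mem_powerset] at hT
          exact lt_of_le_of_ne hT.2 hT.1))] at h1
        have h2 : ∑ T ∈ U.powerset, ((1/2 : ℝ) ^ m
            + (-1 : ℝ) ^ T.card * (A (fun _ => true) - (1/2 : ℝ) ^ m)) = (1/2 : ℝ) ^ Uᶜ.card := by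
          have h3 : ∑ T ∈ U.powerset, (-1 : ℝ) ^ T.card = 0 := by
            exact_mod_cast Finset.sum_powerset_neg_one_pow_card_of_nonempty hU
          rw [Finset.sum_add_distrib, ← Finset.sum_mul, h3]
          have h4 : (1/2 : ℝ) ^ m = (1/2) ^ U.card * (1/2) ^ Uᶜ.card := by
            rw [← pow_add, hc]
          rw [Finset.sum_const, Finset.card_powerset, h4, nsmul_eq_mul, ← mul_assoc]
          push_cast
          rw [← mul_pow]
          norm_num
        rw [← Finset.insert_erase (Finset.mem_powerset_self U),
          Finset.sum_insert (Finset.notMem_erase _ _)] at h2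
        linarith
  intro x
  rw [← key]
  congr 1
  ext i
  simp
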